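/- Let p, q > 1 and a ≥ 1. Then tan_{p,q} is (a,a)-convex on (0,1): for all r, s ∈ (0,1), tan_{p,q}(((r^a + s^a)/2)^{1/a}) ≤ ((tan_{p,q}(r)^a + tan_{p,q}(s)^a)/2)^{1/a}. -/

import Mathlib

open Real Set

/-- `arcsinPQ p q x = ∫₀ˣ (1 - tᵠ)^(-1/p) dt`, the generalized inverse sine. -/
noncomputable def arcsinPQ (p q x : ℝ) : ℝ := ∫ t in (0:ℝ)..x, (1 - t ^ q) ^ (-(1/p))

/-- `sinPQ p q` is the inverse function of `arcsinPQ p q` (restricted to `[0,1]`). -/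
noncomputable def sinPQ (p q : ℝ) : ℝ → ℝ := Function.invFunOn (arcsinPQ p q) (Set.Icc 0 1)

/-- `cosPQ p q x = (1 - sinPQ p q x ^ q)^(1/p)`. -/
noncomputable def cosPQ (p q x : ℝ) : ℝ := (1 - sinPQ p q x ^ q) ^ (1/p)

/-- `tanPQ p q x = sinPQ p q x / cosPQ p q x`. -/
noncomputable def tanPQ (p q x : ℝ) : ℝ := sinPQ p q x / cosPQ p q x

/-!
Put `A = arcsinPQ p q` and `T u = u * (1 - u ^ q) ^ (-1/p)`, so that `u ↦ (A u, T u)` traces the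
graph of `tanPQ p q`. The ratio `T' / A' = 1 + (q / p) * u ^ q / (1 - u ^ q)` increases with `u`,
hence the graph lies above each of its tangents, and the one at `m` has the form `x ↦ k * x - c`
with `k ≥ 0`; it passes below the origin, so `c ≥ 0`. For `m = M_a(r, s)`, homogeneity and
monotonicity of the power mean, followed by Minkowski's inequality, yield
`tan m + c = M_a(k r, k s) ≤ M_a(tan r + c, tan s + c) ≤ M_a(tan r, tan s) + c`.
-/

section PowerMean

/-- The power mean `M_a(x, y)`, meant for `a ≠ 0` and nonnegative `x`, `y`. -/
noncomputable def powerMean (a x y : ℝ) : ℝ := ((x ^ a + y ^ a) / 2) ^ (1 / a)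

/-- `(a, b)`-convexity of `f` on `S`: convexity with the `a`-power mean of the arguments and the
`b`-power mean of the values in place of the arithmetic means. -/
def PowerMeanConvexOn (a b : ℝ) (f : ℝ → ℝ) (S : Set ℝ) : Prop :=
  ∀ x ∈ S, ∀ y ∈ S, f (powerMean a x y) ≤ powerMean b (f x) (f y)

variable {a x y z w c : ℝ}

lemma powerMean_self (ha : a ≠ 0) (hx : 0 ≤ x) : powerMean a x x = x := by
  rw [powerMean, add_self_div_two, one_div, rpow_rpow_inv hx ha]

lemma powerMean_const_mul (ha : a ≠ 0) (hc : 0 ≤ c) (hx : 0 ≤ x) (hy : 0 ≤ y) :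
    powerMean a (c * x) (c * y) = c * powerMean a x y := by
  rw [powerMean, mul_rpow hc hx, mul_rpow hc hy, ← mul_add, mul_div_assoc,
    mul_rpow (by positivity) (by positivity), one_div, rpow_rpow_inv hc ha, powerMean, one_div]

lemma powerMean_le_powerMean (ha : 0 ≤ a) (hx : 0 ≤ x) (hy : 0 ≤ y) (hxz : x ≤ z) (hyw : y ≤ w) :
    powerMean a x y ≤ powerMean a z w := by
  unfold powerMean
  gcongr

lemma powerMean_mem_uIcc (ha : 0 < a) (hx : 0 ≤ x) (hy : 0 ≤ y) : powerMean a x y ∈ uIcc x y := by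
  have hmin : 0 ≤ min x y := le_min hx hy
  have hmax : 0 ≤ max x y := le_max_of_le_left hx
  rw [uIcc, mem_Icc, ← powerMean_self ha.ne' hmin, ← powerMean_self ha.ne' hmax]
  exact ⟨powerMean_le_powerMean ha.le hmin hmin (min_le_left x y) (min_le_right x y),
    powerMean_le_powerMean ha.le hx hy (le_max_left x y) (le_max_right x y)⟩

lemma powerMean_add_le (ha : 1 ≤ a) (hx : 0 ≤ x) (hy : 0 ≤ y) (hz : 0 ≤ z) (hw : 0 ≤ w) :
    powerMean a (x + z) (y + w) ≤ powerMean a x y + powerMean a z w := by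
  have minkowski : ((x + z) ^ a + (y + w) ^ a) ^ (1 / a) ≤
      (x ^ a + y ^ a) ^ (1 / a) + (z ^ a + w ^ a) ^ (1 / a) := by
    simpa using Real.Lp_add_le_of_nonneg Finset.univ (f := ![x, y]) (g := ![z, w]) ha
      (by simp [Fin.forall_fin_two, hx, hy]) (by simp [Fin.forall_fin_two, hz, hw])
  simp only [powerMean]
  rw [div_rpow (by positivity) two_pos.le, div_rpow (by positivity) two_pos.le,
    div_rpow (by positivity) two_pos.le, ← add_div]
  gcongr

lemma powerMeanConvexOn_of_subgradient {f : ℝ → ℝ} {S : Set ℝ} (ha : 1 ≤ a) (hS : S.OrdConnected)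
    (hpos : ∀ x ∈ S, 0 < x) (hf : ∀ x ∈ S, 0 ≤ f x)
    (hk : ∀ m ∈ S, ∃ k, f m ≤ k * m ∧ ∀ x ∈ S, f m + k * (x - m) ≤ f x) :
    PowerMeanConvexOn a a f S := by
  intro r hr s hs
  have ha0 : 0 < a := one_pos.trans_le ha
  have hr0 := (hpos r hr).le
  have hs0 := (hpos s hs).le
  set m := powerMean a r s
  have hmS : m ∈ S := hS.uIcc_subset hr hs (powerMean_mem_uIcc ha0 hr0 hs0)
  obtain ⟨k, hkm, htangent⟩ := hk m hmS
  have hk0 : 0 ≤ k := nonneg_of_mul_nonneg_left ((hf m hmS).trans hkm) (hpos m hmS)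
  have hc : 0 ≤ k * m - f m := sub_nonneg.2 hkm
  have hle : ∀ x ∈ S, k * x ≤ f x + (k * m - f m) := fun x hx => by linarith [htangent x hx]
  suffices k * m ≤ powerMean a (f r) (f s) + (k * m - f m) by linarith
  calc k * m = powerMean a (k * r) (k * s) := (powerMean_const_mul ha0.ne' hk0 hr0 hs0).symm
    _ ≤ powerMean a (f r + (k * m - f m)) (f s + (k * m - f m)) :=
      powerMean_le_powerMean ha0.le (mul_nonneg hk0 hr0) (mul_nonneg hk0 hs0) (hle r hr) (hle s hs)
    _ ≤ powerMean a (f r) (f s) + powerMean a (k * m - f m) (k * m - f m) :=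
      powerMean_add_le ha (hf r hr) (hf s hs) hc hc
    _ = powerMean a (f r) (f s) + (k * m - f m) := by rw [powerMean_self ha0.ne' hc]

end PowerMean

/-- The plane curve `(g, f)`, whose slope `k` increases, lies above its tangent at the parameter
`v`. -/
lemma isMinOn_sub_const_mul_of_hasDerivAt {D : Set ℝ} (hD : Convex ℝ D) {f g g' k : ℝ → ℝ}
    (hf : ContinuousOn f D) (hg : ContinuousOn g D)
    (hf' : ∀ t ∈ interior D, HasDerivAt f (k t * g' t) t)
    (hg' : ∀ t ∈ interior D, HasDerivAt g (g' t) t) (hg'_nonneg : ∀ t ∈ interior D, 0 ≤ g' t)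
    (hk : MonotoneOn k D) {v : ℝ} (hv : v ∈ D) :
    IsMinOn (fun u => f u - k v * g u) D v := by
  have hcont : ContinuousOn (fun u => f u - k v * g u) D := hf.sub (continuousOn_const.mul hg)
  have hderiv : ∀ t ∈ interior D,
      HasDerivAt (fun u => f u - k v * g u) ((k t - k v) * g' t) t := fun t ht =>
    ((hf' t ht).sub ((hg' t ht).const_mul (k v))).congr_deriv (by ring)
  intro u hu
  rcases le_total u v with huv | hvu
  · refine antitoneOn_of_deriv_nonpos (hD.inter (convex_Iic v)) (hcont.mono inter_subset_left)
      (fun t ht => ?_) (fun t ht => ?_) ⟨hu, huv⟩ ⟨hv, le_refl v⟩ huv <;>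
      rw [interior_inter, interior_Iic] at ht
    · exact (hderiv t ht.1).differentiableAt.differentiableWithinAt
    · rw [(hderiv t ht.1).deriv]
      exact mul_nonpos_of_nonpos_of_nonneg
        (sub_nonpos.2 (hk (interior_subset ht.1) hv ht.2.le)) (hg'_nonneg t ht.1)
  · refine monotoneOn_of_deriv_nonneg (hD.inter (convex_Ici v)) (hcont.mono inter_subset_left)
      (fun t ht => ?_) (fun t ht => ?_) ⟨hv, le_refl v⟩ ⟨hu, hvu⟩ hvu <;>
      rw [interior_inter, interior_Ici] at ht
    · exact (hderiv t ht.1).differentiableAt.differentiableWithinAt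
    · rw [(hderiv t ht.1).deriv]
      exact mul_nonneg (sub_nonneg.2 (hk hv (interior_subset ht.1) ht.2.le)) (hg'_nonneg t ht.1)

section TanPQ

variable {p q : ℝ}

lemma one_sub_rpow_pos (hq : 0 < q) {t : ℝ} (ht : t ∈ Ico (0 : ℝ) 1) : 0 < 1 - t ^ q :=
  sub_pos.2 (rpow_lt_one ht.1 ht.2 hq)

lemma continuousAt_one_sub_rpow_rpow (hq : 0 < q) (b : ℝ) {t : ℝ} (ht : t ∈ Ico (0 : ℝ) 1) :
    ContinuousAt (fun t : ℝ => (1 - t ^ q) ^ b) t :=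
  (continuousAt_const.sub (continuousAt_rpow_const _ _ (Or.inr hq.le))).rpow_const
    (Or.inl (one_sub_rpow_pos hq ht).ne')

lemma intervalIntegrable_one_sub_rpow_rpow (hq : 0 < q) (b : ℝ) {u : ℝ} (hu : u ∈ Ico (0 : ℝ) 1) :
    IntervalIntegrable (fun t : ℝ => (1 - t ^ q) ^ b) MeasureTheory.volume 0 u := by
  refine ContinuousOn.intervalIntegrable fun t ht => ?_
  rw [uIcc_of_le hu.1] at ht
  exact (continuousAt_one_sub_rpow_rpow hq b ⟨ht.1, ht.2.trans_lt hu.2⟩).continuousWithinAt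

lemma arcsinPQ_zero : arcsinPQ p q 0 = 0 := intervalIntegral.integral_same

lemma hasDerivAt_arcsinPQ (hq : 0 < q) {u : ℝ} (hu : u ∈ Ico (0 : ℝ) 1) :
    HasDerivAt (arcsinPQ p q) ((1 - u ^ q) ^ (-(1 / p))) u :=
  intervalIntegral.integral_hasDerivAt_right (intervalIntegrable_one_sub_rpow_rpow hq _ hu)
    (Measurable.stronglyMeasurable (by fun_prop)).stronglyMeasurableAtFilter
    (continuousAt_one_sub_rpow_rpow hq _ hu)

lemma continuousOn_arcsinPQ (hq : 0 < q) : ContinuousOn (arcsinPQ p q) (Ico 0 1) := fun _ hu =>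
  (hasDerivAt_arcsinPQ hq hu).continuousAt.continuousWithinAt

/- For `v = 1` the integral may diverge (when `p ≤ 1`), and then `arcsinPQ p q 1 = 0`. -/
lemma arcsinPQ_lt_arcsinPQ (hq : 0 < q) {u v : ℝ} (hu : 0 ≤ u) (huv : u < v) (hv : v ≤ 1)
    (hint : IntervalIntegrable (fun t : ℝ => (1 - t ^ q) ^ (-(1 / p))) MeasureTheory.volume 0 v) :
    arcsinPQ p q u < arcsinPQ p q v := by
  have hint_u := intervalIntegrable_one_sub_rpow_rpow hq (-(1 / p)) ⟨hu, huv.trans_le hv⟩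
  rw [← sub_pos, arcsinPQ, arcsinPQ, intervalIntegral.integral_interval_sub_left hint hint_u]
  refine intervalIntegral.intervalIntegral_pos_of_pos_on (hint_u.symm.trans hint) (fun t ht => ?_)
    huv
  exact rpow_pos_of_pos (one_sub_rpow_pos hq ⟨hu.trans ht.1.le, ht.2.trans_le hv⟩) _

lemma strictMonoOn_arcsinPQ (hq : 0 < q) : StrictMonoOn (arcsinPQ p q) (Ico 0 1) :=
  fun _ hu _ hv huv => arcsinPQ_lt_arcsinPQ hq hu.1 huv hv.2.le
    (intervalIntegrable_one_sub_rpow_rpow hq _ hv)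

lemma arcsinPQ_pos (hq : 0 < q) {u : ℝ} (hu : u ∈ Ioo (0 : ℝ) 1) : 0 < arcsinPQ p q u :=
  arcsinPQ_zero.symm.trans_lt
    (strictMonoOn_arcsinPQ hq ⟨le_rfl, one_pos⟩ (Ioo_subset_Ico_self hu) hu.1)

lemma le_arcsinPQ (hp : 0 < p) (hq : 0 < q) {u : ℝ} (hu : u ∈ Ico (0 : ℝ) 1) :
    u ≤ arcsinPQ p q u := by
  have h := intervalIntegral.integral_mono_on (f := fun _ => (1 : ℝ)) hu.1 (by simp)
    (intervalIntegrable_one_sub_rpow_rpow hq (-(1 / p)) hu) fun t ht =>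
      one_le_rpow_of_pos_of_le_one_of_nonpos (one_sub_rpow_pos hq ⟨ht.1, ht.2.trans_lt hu.2⟩)
        (sub_le_self _ (rpow_nonneg ht.1 q)) (by simp [hp.le])
  simpa [arcsinPQ] using h

lemma Ioo_zero_one_subset_image_arcsinPQ (hp : 0 < p) (hq : 0 < q) :
    Ioo 0 1 ⊆ arcsinPQ p q '' Ioo 0 1 := by
  intro x hx
  have hcont : ContinuousOn (arcsinPQ p q) (Icc 0 x) :=
    (continuousOn_arcsinPQ hq).mono (Icc_subset_Ico_right hx.2)
  have hx_mem : x ∈ Ioc (arcsinPQ p q 0) (arcsinPQ p q x) :=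
    ⟨arcsinPQ_zero.trans_lt hx.1, le_arcsinPQ hp hq (Ioo_subset_Ico_self hx)⟩
  exact image_mono (Ioc_subset_Ioo_right hx.2) (intermediate_value_Ioc hx.1.le hcont hx_mem)

lemma ordConnected_image_arcsinPQ (hq : 0 < q) : (arcsinPQ p q '' Ioo 0 1).OrdConnected :=
  (isPreconnected_Ioo.image _
    ((continuousOn_arcsinPQ hq).mono Ioo_subset_Ico_self)).ordConnected

lemma sinPQ_arcsinPQ (hq : 0 < q) {u : ℝ} (hu : u ∈ Ioo (0 : ℝ) 1) :
    sinPQ p q (arcsinPQ p q u) = u := by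
  have hex : ∃ v ∈ Icc (0 : ℝ) 1, arcsinPQ p q v = arcsinPQ p q u :=
    ⟨u, Ioo_subset_Icc_self hu, rfl⟩
  have hmem : sinPQ p q (arcsinPQ p q u) ∈ Icc 0 1 := Function.invFunOn_mem hex
  have heq : arcsinPQ p q (sinPQ p q (arcsinPQ p q u)) = arcsinPQ p q u := Function.invFunOn_eq hex
  have hne_one : sinPQ p q (arcsinPQ p q u) ≠ 1 := by
    intro hone
    rw [hone] at heq
    by_cases hint : IntervalIntegrable (fun t : ℝ => (1 - t ^ q) ^ (-(1 / p)))
        MeasureTheory.volume 0 1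
    · exact (arcsinPQ_lt_arcsinPQ hq hu.1.le hu.2 le_rfl hint).ne' heq
    · rw [arcsinPQ, intervalIntegral.integral_undef hint] at heq
      exact (arcsinPQ_pos hq hu).ne heq
  exact (strictMonoOn_arcsinPQ hq).injOn ⟨hmem.1, hmem.2.lt_of_ne hne_one⟩
    (Ioo_subset_Ico_self hu) heq

lemma tanPQ_arcsinPQ (hq : 0 < q) {u : ℝ} (hu : u ∈ Ioo (0 : ℝ) 1) :
    tanPQ p q (arcsinPQ p q u) = u * (1 - u ^ q) ^ (-(1 / p)) := by
  rw [tanPQ, cosPQ, sinPQ_arcsinPQ hq hu,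
    rpow_neg (one_sub_rpow_pos hq (Ioo_subset_Ico_self hu)).le, div_eq_mul_inv]

/-- The slope of `tanPQ p q` at `arcsinPQ p q u`, as a function of `u`. -/
noncomputable def tanPQSlope (p q u : ℝ) : ℝ := 1 + q / p * (u ^ q / (1 - u ^ q))

lemma monotoneOn_tanPQSlope (hp : 0 < p) (hq : 0 < q) : MonotoneOn (tanPQSlope p q) (Ico 0 1) := by
  intro u hu v hv huv
  have hu0 := hu.1
  have hv0 := hv.1
  have hpos := one_sub_rpow_pos hq hv
  unfold tanPQSlope
  gcongr

lemma hasDerivAt_mul_one_sub_rpow_rpow (hq : 0 < q) {u : ℝ} (hu : u ∈ Ioo (0 : ℝ) 1) :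
    HasDerivAt (fun u : ℝ => u * (1 - u ^ q) ^ (-(1 / p)))
      (tanPQSlope p q u * (1 - u ^ q) ^ (-(1 / p))) u := by
  have hpos := one_sub_rpow_pos hq (Ioo_subset_Ico_self hu)
  have hinner : HasDerivAt (fun u : ℝ => 1 - u ^ q) (-(q * u ^ (q - 1))) u :=
    (hasDerivAt_rpow_const (Or.inl hu.1.ne')).const_sub 1
  refine ((hasDerivAt_id u).mul
    (hinner.rpow_const (p := -(1 / p)) (Or.inl hpos.ne'))).congr_deriv ?_
  rw [rpow_sub_one hpos.ne', rpow_sub_one hu.1.ne', tanPQSlope, id]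
  field_simp [hu.1.ne', hpos.ne']

lemma isMinOn_sub_tanPQSlope_mul_arcsinPQ (hp : 0 < p) (hq : 0 < q) {v : ℝ}
    (hv : v ∈ Ico (0 : ℝ) 1) :
    IsMinOn (fun u => u * (1 - u ^ q) ^ (-(1 / p)) - tanPQSlope p q v * arcsinPQ p q u)
      (Ico 0 1) v := by
  refine isMinOn_sub_const_mul_of_hasDerivAt (g' := fun t => (1 - t ^ q) ^ (-(1 / p)))
    (convex_Ico 0 1) (continuousOn_id.mul fun t ht =>
      (continuousAt_one_sub_rpow_rpow hq _ ht).continuousWithinAt) (continuousOn_arcsinPQ hq)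
    (fun t ht => ?_) (fun t ht => hasDerivAt_arcsinPQ hq (interior_subset ht))
    (fun t ht => rpow_nonneg (one_sub_rpow_pos hq (interior_subset ht)).le _)
    (monotoneOn_tanPQSlope hp hq) hv
  rw [interior_Ico] at ht
  exact hasDerivAt_mul_one_sub_rpow_rpow hq ht

/-- The domain is `(0, π_{p,q} / 2)`. It is not written `Ioo 0 (arcsinPQ p q 1)` because for `p ≤ 1`
the integral up to `1` diverges: the domain is then `(0, ∞)`, whereas `arcsinPQ p q 1 = 0`. -/
theorem tanPQ_aa_convex_general {a : ℝ} (hp : 0 < p) (hq : 0 < q) (ha : 1 ≤ a) :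
    PowerMeanConvexOn a a (tanPQ p q) (arcsinPQ p q '' Ioo 0 1) := by
  refine powerMeanConvexOn_of_subgradient ha (ordConnected_image_arcsinPQ hq)
    (forall_mem_image.2 fun u hu => arcsinPQ_pos hq hu) (forall_mem_image.2 fun u hu => ?_)
    (forall_mem_image.2 fun v hv => ⟨tanPQSlope p q v, ?_, forall_mem_image.2 fun u hu => ?_⟩)
  · rw [tanPQ_arcsinPQ hq hu]
    exact mul_nonneg hu.1.le (rpow_nonneg (one_sub_rpow_pos hq (Ioo_subset_Ico_self hu)).le _)
  · have htangent_zero := isMinOn_iff.1 (isMinOn_sub_tanPQSlope_mul_arcsinPQ hp hq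
      (Ioo_subset_Ico_self hv)) 0 ⟨le_rfl, one_pos⟩
    simpa [tanPQ_arcsinPQ hq hv, arcsinPQ_zero] using htangent_zero
  · have htangent := isMinOn_iff.1 (isMinOn_sub_tanPQSlope_mul_arcsinPQ hp hq
      (Ioo_subset_Ico_self hv)) u (Ioo_subset_Ico_self hu)
    rw [tanPQ_arcsinPQ hq hu, tanPQ_arcsinPQ hq hv]
    linarith

end TanPQ

theorem tanPQ_aa_convex (p q a : ℝ) (hp : 1 < p) (hq : 1 < q) (ha : 1 ≤ a)
    (r s : ℝ) (hr : r ∈ Set.Ioo (0:ℝ) 1) (hs : s ∈ Set.Ioo (0:ℝ) 1) :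
    tanPQ p q (((r ^ a + s ^ a) / 2) ^ (1/a)) ≤
      ((tanPQ p q r ^ a + tanPQ p q s ^ a) / 2) ^ (1/a) :=
  have hsub := Ioo_zero_one_subset_image_arcsinPQ (one_pos.trans hp) (one_pos.trans hq)
  tanPQ_aa_convex_general (one_pos.trans hp) (one_pos.trans hq) ha r (hsub hr) s (hsub hs)
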